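/- Let G be a Grothendieck category of global dimension at most d < ∞ and let (T_n)_{n∈ℤ} be a sequence of objects of G. Then (T_n)_{n∈ℤ} is a superexceptional sequence (i.e. Ext^k_G(T_n, T_p^{(I)}) = 0 for all p, n ∈ ℤ, all sets I, and all natural numbers k > p - n) if and only if the set T = {T_n[n] : n ∈ ℤ} is strongly nonpositive in D(G), i.e. Hom_{D(G)}(X, Y[k]) = 0 for all k > 0 whenever X and Y are coproducts of objects of T. -/

import Mathlib

open CategoryTheory CategoryTheory.Limits

universe w v u

variable {G : Type u} [Category.{v} G] [Abelian G] [HasColimits G]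
  [HasDerivedCategory.{w} G] (T : ℤ → G)

/-- `Sum({T_n[n] : n ∈ ℤ})`: the objects of `D(G)` isomorphic to a set-indexed coproduct of
shifted stalk complexes `T_n[n]`. -/
def sumShiftSet [HasCoproducts.{v} (DerivedCategory G)] : Set (DerivedCategory G) :=
  {Z | ∃ (I : Type v) (g : I → ℤ), Nonempty (Z ≅
    ∐ (fun i => ((DerivedCategory.singleFunctor G 0).obj (T (g i)))⟦g i⟧))}

/-!
Exactness of coproducts makes coproducts of quasi-isomorphisms quasi-isomorphisms, so that
coproducts in the derived category are computed by coproducts of complexes. In particular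
`∐ T_p[p] = (∐ T_p)[p]`, and coproducts preserve `D^{≤ n}` and `D^{≥ n}`.

If `X` has projective dimension `< d`, then `Hom(X, -)` vanishes on `D^{≤ -d}`: a morphism from `X`
to an object of `D^{≤ -d}` factors through an element of `Ext^d(X, N)` for some `N`. Hence, among
the summands of a coproduct of shifted stalk complexes `T_p[p]`, those with `p < m` and those with
`p ≥ m + d` receive no nonzero morphism from `X[m]`. Only finitely many values of `p` remain, so
`Hom(X[m], -)` splits as a finite direct sum of groups `Ext^{p - m}(X, T_p^{(I)})`.
-/

/-! ### Coproducts in the derived category -/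

section

variable {C : Type*} [Category* C] [Abelian C] {J : Type*} [Category* J]

lemma quasiIso_of_forall_quasiIso_evaluation {S₁ S₂ : ShortComplex (J ⥤ C)} (φ : S₁ ⟶ S₂)
    (h : ∀ j, ShortComplex.QuasiIso (((evaluation J C).obj j).mapShortComplex.map φ)) :
    ShortComplex.QuasiIso φ := by
  rw [ShortComplex.quasiIso_iff, NatTrans.isIso_iff_isIso_app]
  intro j
  have hj := h j
  rw [ShortComplex.quasiIso_iff] at hj
  exact ((MorphismProperty.isomorphisms C).arrow_mk_iso_iff (Arrow.isoMk _ _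
    (ShortComplex.mapHomologyIso_hom_naturality φ ((evaluation J C).obj j)).symm)).1 hj

variable [HasColimitsOfShape J C] [HasExactColimitsOfShape J C]

lemma shortComplex_quasiIso_of_isColimit {F₁ F₂ : J ⥤ ShortComplex C} (f : F₁ ⟶ F₂)
    (hf : ∀ j, ShortComplex.QuasiIso (f.app j)) {c₁ : Cocone F₁} {c₂ : Cocone F₂}
    (hc₁ : IsColimit c₁) (hc₂ : IsColimit c₂) (φ : c₁.pt ⟶ c₂.pt)
    (hφ : ∀ j, c₁.ι.app j ≫ φ = f.app j ≫ c₂.ι.app j) :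
    ShortComplex.QuasiIso φ := by
  let E := ShortComplex.FunctorEquivalence.inverse J C
  have : ShortComplex.QuasiIso (E.map f) := quasiIso_of_forall_quasiIso_evaluation _ hf
  let ψ : (ShortComplex.colimitCocone F₁).pt ⟶ (ShortComplex.colimitCocone F₂).pt :=
    (colim (J := J) (C := C)).mapShortComplex.map (E.map f)
  have hψ : ShortComplex.QuasiIso ψ :=
    ShortComplex.quasiIso_map_of_preservesLeftHomology colim (E.map f)
  let e₁ := (ShortComplex.isColimitColimitCocone F₁).coconePointUniqueUpToIso hc₁
  let e₂ := (ShortComplex.isColimitColimitCocone F₂).coconePointUniqueUpToIso hc₂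
  have ι_ψ (j : J) : (ShortComplex.colimitCocone F₁).ι.app j ≫ ψ =
      f.app j ≫ (ShortComplex.colimitCocone F₂).ι.app j := by
    ext <;> exact ι_colimMap _ _
  have comm : e₁.hom ≫ φ = ψ ≫ e₂.hom :=
    (ShortComplex.isColimitColimitCocone F₁).hom_ext fun j => by
      rw [IsColimit.comp_coconePointUniqueUpToIso_hom_assoc, hφ, reassoc_of% ι_ψ,
        IsColimit.comp_coconePointUniqueUpToIso_hom]
  rw [← Iso.eq_inv_comp] at comm
  rw [comm]
  infer_instance

instance isStableUnderColimitsOfShape_quasiIso {ι : Type*} (c : ComplexShape ι) :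
    (HomologicalComplex.quasiIso C c).IsStableUnderColimitsOfShape J where
  condition F₁ F₂ c₁ c₂ hc₁ hc₂ f hf φ hφ := by
    rw [HomologicalComplex.mem_quasiIso_iff, quasiIso_iff]
    intro i
    let S := HomologicalComplex.shortComplexFunctor C c i
    have hS {F : J ⥤ HomologicalComplex C c} {s : Cocone F} (hs : IsColimit s) :
        IsColimit (S.mapCocone s) :=
      ShortComplex.isColimitOfIsColimitπ _
        (isColimitOfPreserves (HomologicalComplex.eval C c _) hs)
        (isColimitOfPreserves (HomologicalComplex.eval C c _) hs)
        (isColimitOfPreserves (HomologicalComplex.eval C c _) hs)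
    rw [quasiIsoAt_iff]
    refine shortComplex_quasiIso_of_isColimit (Functor.whiskerRight f S) (fun j => ?_)
      (hS hc₁) (hS hc₂) _ fun j => ?_
    · have : QuasiIso (f.app j) := hf j
      exact (quasiIsoAt_iff (f.app j) i).1 inferInstance
    · exact (S.map_comp _ _).symm.trans ((congrArg S.map (hφ j)).trans (S.map_comp _ _))

end

section

variable {C : Type*} [Category* C] [Abelian C] [HasDerivedCategory C]
open DerivedCategory

lemma exists_isZero_factorization_of_Q_map_eq_zero {K L : CochainComplex C ℤ} (f : K ⟶ L)
    (hf : Q.map f = 0) :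
    ∃ (N : CochainComplex C ℤ) (a : K ⟶ N) (b : N ⟶ L), IsZero (Q.obj N) ∧ a ≫ b = f := by
  obtain ⟨K', s, hs, ⟨h⟩⟩ : ∃ (K' : CochainComplex C ℤ) (s : K' ⟶ K),
      IsIso (Q.map s) ∧ Nonempty (Homotopy (s ≫ f) 0) := by
    let π := HomotopyCategory.quotient C (.up ℤ)
    have hf' : Qh.map (π.map f) = Qh.map 0 := by
      rw [Functor.map_zero]
      exact hf
    rw [MorphismProperty.map_eq_iff_precomp Qh (HomotopyCategory.quasiIso C (.up ℤ))] at hf'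
    obtain ⟨X, s, hs, eq⟩ := hf'
    obtain ⟨K', rfl⟩ := HomotopyCategory.quotient_obj_surjective X
    obtain ⟨s, rfl⟩ := π.map_surjective s
    refine ⟨K', s, (isIso_Qh_map_iff _).2 hs, ⟨HomotopyCategory.homotopyOfEq _ _ ?_⟩⟩
    rw [Functor.map_comp, Functor.map_zero]
    exact eq.trans comp_zero
  obtain ⟨z, hz⟩ := CochainComplex.HomComplex.Cochain.equivHomotopy _ _ h
  exact ⟨CochainComplex.mappingCone s, CochainComplex.mappingCone.inr s,
    CochainComplex.mappingCone.desc s z f (by simp [hz]),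
    (Pretriangulated.Triangle.isZero₃_iff_isIso₁ _ (mappingCone_triangle_distinguished s)).2 hs,
    by simp⟩

variable {J : Type*} [HasCoproductsOfShape J C] [HasExactColimitsOfShape (Discrete J) C]

lemma isIso_Q_map_sigmaMap {K L : J → CochainComplex C ℤ} (s : ∀ j, K j ⟶ L j)
    [hs : ∀ j, IsIso (Q.map (s j))] : IsIso (Q.map (Limits.Sigma.map s)) := by
  rw [isIso_Q_map_iff_quasiIso]
  exact (HomologicalComplex.quasiIso C (.up ℤ)).colimMap
    (Discrete.natTrans (F := Discrete.functor K) (G := Discrete.functor L) fun j => s j.as)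
    fun j => (isIso_Q_map_iff_quasiIso _ _).1 (hs j.as)

lemma isZero_Q_obj_sigma (N : J → CochainComplex C ℤ) (hN : ∀ j, IsZero (Q.obj (N j))) :
    IsZero (Q.obj (∐ N)) := by
  let z (j : J) : N j ⟶ N j := 0
  have (j : J) : IsIso (Q.map (z j)) := (hN j).isIso (hN j) _
  have : IsIso (Q.map (Limits.Sigma.map z)) := isIso_Q_map_sigmaMap z
  have hz : Limits.Sigma.map z = 0 := Sigma.hom_ext _ _ fun j => by simp [z]
  exact IsZero.of_mono_eq_zero (Q.map (Limits.Sigma.map z)) (by rw [hz, Functor.map_zero])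

lemma Q_map_sigma_hom_ext {K : J → CochainComplex C ℤ} {Z : DerivedCategory C}
    {f g : Q.obj (∐ K) ⟶ Z} (h : ∀ j, Q.map (Sigma.ι K j) ≫ f = Q.map (Sigma.ι K j) ≫ g) :
    f = g := by
  rw [← sub_eq_zero]
  wlog hZ : ∃ L, Z = Q.obj L generalizing Z
  · rw [← cancel_mono (Q.objObjPreimageIso Z).inv, zero_comp, Preadditive.sub_comp]
    exact this (fun j => by simp only [reassoc_of% h]) ⟨_, rfl⟩
  obtain ⟨L, rfl⟩ := hZ
  obtain ⟨L', φ, s, hs, fac⟩ := left_fac (f - g)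
  have hφ (j : J) : Q.map (Sigma.ι K j ≫ φ) = 0 := by
    rw [← cancel_mono (inv (Q.map s)), Q.map_comp, Category.assoc, ← fac, Preadditive.comp_sub, h,
      sub_self, zero_comp]
  choose N a b hN hab using fun j => exists_isZero_factorization_of_Q_map_eq_zero _ (hφ j)
  have hφ' : φ = Limits.Sigma.map a ≫ Sigma.desc b := Sigma.hom_ext _ _ fun j => by simp [hab]
  rw [fac, hφ', Q.map_comp, (isZero_Q_obj_sigma N hN).eq_of_tgt (Q.map (Limits.Sigma.map a)) 0,
    zero_comp, zero_comp]

lemma exists_Q_map_sigma_ι_comp_eq {K : J → CochainComplex C ℤ} {Z : DerivedCategory C}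
    (f : ∀ j, Q.obj (K j) ⟶ Z) :
    ∃ g : Q.obj (∐ K) ⟶ Z, ∀ j, Q.map (Sigma.ι K j) ≫ g = f j := by
  let e := Q.objObjPreimageIso Z
  choose K' s hs φ fac using fun j => right_fac (f j ≫ e.inv)
  have : IsIso (Q.map (Limits.Sigma.map s)) := isIso_Q_map_sigmaMap s
  refine ⟨inv (Q.map (Limits.Sigma.map s)) ≫ Q.map (Sigma.desc φ) ≫ e.hom, fun j => ?_⟩
  have comm : Q.map (Sigma.ι K j) ≫ inv (Q.map (Limits.Sigma.map s)) =
      inv (Q.map (s j)) ≫ Q.map (Sigma.ι K' j) := by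
    rw [IsIso.comp_inv_eq, Category.assoc, ← Q.map_comp, Sigma.ι_map, Q.map_comp,
      IsIso.inv_hom_id_assoc]
  rw [reassoc_of% comm, ← Q.map_comp_assoc, Sigma.ι_desc, ← Category.assoc, ← fac,
    Category.assoc, Iso.inv_hom_id, Category.comp_id]

instance preservesCoproductsOfShape_Q :
    PreservesColimitsOfShape (Discrete J) (Q : CochainComplex C ℤ ⥤ DerivedCategory C) :=
  have (K : J → CochainComplex C ℤ) : PreservesColimit (Discrete.functor K) (Q (C := C)) := by
    refine preservesColimit_of_preserves_colimit_cocone (coproductIsCoproduct K) ?_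
    refine (isColimitMapCoconeCofanMkEquiv _ _ _).symm ?_
    choose desc hdesc using fun Z : DerivedCategory C =>
      exists_Q_map_sigma_ι_comp_eq (K := K) (Z := Z)
    exact Cofan.IsColimit.mk _ (fun t => desc _ t.inj) (fun t => hdesc _ t.inj)
      fun t m hm => Q_map_sigma_hom_ext fun j => (hm j).trans (hdesc _ t.inj j).symm
  preservesColimitsOfShape_of_discrete _

end

section

variable {C : Type*} [Category* C] [Abelian C] {J : Type*} [HasCoproductsOfShape J C]
open DerivedCategory

lemma isStrictlyGE_sigma (K : J → CochainComplex C ℤ) (n : ℤ) [∀ j, (K j).IsStrictlyGE n] :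
    (∐ K).IsStrictlyGE n := by
  rw [CochainComplex.isStrictlyGE_iff]
  intro i hi
  refine IsZero.of_iso ?_ (PreservesCoproduct.iso (HomologicalComplex.eval C (.up ℤ) i) K)
  exact (IsZero.iff_id_eq_zero _).2 <| Sigma.hom_ext _ _ fun j =>
    ((K j).isZero_of_isStrictlyGE n i hi).eq_of_src _ _

variable [HasDerivedCategory C] [HasExactColimitsOfShape (Discrete J) C]

lemma isGE_sigma (Y : J → DerivedCategory C) [HasCoproduct Y] (n : ℤ) [∀ j, (Y j).IsGE n] :
    (∐ Y).IsGE n := by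
  choose K hK e using fun j => exists_iso_Q_obj_of_isGE (Y j) n
  have := isStrictlyGE_sigma K n
  let α : Discrete.functor (fun j => Q.obj (K j)) ≅ Discrete.functor Y :=
    Discrete.natIso fun j => (e j.as).some.symm
  have : HasCoproduct fun j => Q.obj (K j) := hasColimit_of_iso α
  exact TStructure.t.isGE_of_iso (PreservesCoproduct.iso Q K ≪≫ HasColimit.isoOfNatIso α) n

instance preservesCoproductsOfShape_singleFunctor (n : ℤ) :
    PreservesColimitsOfShape (Discrete J) (singleFunctor C n) :=
  inferInstanceAs
    (PreservesColimitsOfShape (Discrete J) (HomologicalComplex.single C (.up ℤ) n ⋙ Q))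

end

section

variable {D : Type*} [Category* D] [Preadditive D] [HasZeroObject D] [HasShift D ℤ]
  [∀ n : ℤ, (shiftFunctor D n).Additive] [Pretriangulated D]

lemma isLE_sigma (t : Triangulated.TStructure D) {J : Type*} (Y : J → D)
    [HasCoproduct Y] (n : ℤ) [∀ j, t.IsLE (Y j) n] : t.IsLE (∐ Y) n := by
  rw [t.isLE_iff_orthogonal n (n + 1) rfl]
  exact fun Z f _ => Sigma.hom_ext _ _ fun j =>
    (t.zero (Sigma.ι Y j ≫ f) n (n + 1)).trans comp_zero.symm

end

/-! ### Morphisms out of objects of finite projective dimension -/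

section

variable {C : Type*} [Category* C] [Abelian C] [HasDerivedCategory C]
open DerivedCategory Pretriangulated

lemma exists_from_single_comp_eq_single_map_epi {X : C} {n : ℤ} {L : CochainComplex C ℤ}
    [L.IsStrictlyLE n] (s : L ⟶ (HomologicalComplex.single C (.up ℤ) n).obj X)
    [IsIso (Q.map s)] :
    ∃ (A : C) (i : (HomologicalComplex.single C (.up ℤ) n).obj A ⟶ L) (p : A ⟶ X),
      Epi p ∧ i ≫ s = (HomologicalComplex.single C (.up ℤ) n).map p := by
  let S := HomologicalComplex.single C (.up ℤ) n
  have d_eq_zero (m : ℤ) (hm : (ComplexShape.up ℤ).Rel n m) : L.d n m = 0 :=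
    (L.isZero_of_isStrictlyLE n m (by rw [← hm]; lia)).eq_of_tgt _ _
  let i : S.obj (L.X n) ⟶ L := HomologicalComplex.mkHomFromSingle (𝟙 _) fun m hm => by
    rw [d_eq_zero m hm, comp_zero]
  have : IsIso (i.f n) := by
    rw [HomologicalComplex.mkHomFromSingle_f]
    infer_instance
  obtain ⟨p, hp⟩ := S.map_surjective (i ≫ s)
  refine ⟨L.X n, i, p, (Preadditive.epi_iff_cancel_zero p).2 fun Y q hq => ?_, hp.symm⟩
  have hs : s ≫ S.map q = 0 := by
    refine HomologicalComplex.to_single_hom_ext ((cancel_epi (i.f n)).1 ?_)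
    have : i ≫ s ≫ S.map q = 0 := by rw [← Category.assoc, ← hp, ← S.map_comp, hq, S.map_zero]
    simpa using HomologicalComplex.congr_hom this n
  have hQ : Q.map (S.map q) = 0 := by
    rw [← cancel_epi (Q.map s), comp_zero, ← Q.map_comp, hs, Functor.map_zero]
  have hq₀ : (singleFunctor C n).map q = 0 := hQ
  rwa [Functor.map_eq_zero_iff] at hq₀

lemma exists_epi_Q_map_single_map_comp_eq_zero {X : C} {W : DerivedCategory C} {m n : ℤ}
    (hmn : m < n) [W.IsLE m] (f : Q.obj ((HomologicalComplex.single C (.up ℤ) n).obj X) ⟶ W) :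
    ∃ (A : C) (p : A ⟶ X),
      Epi p ∧ Q.map ((HomologicalComplex.single C (.up ℤ) n).map p) ≫ f = 0 := by
  obtain ⟨K, _, ⟨e⟩⟩ := exists_iso_Q_obj_of_isLE W m
  obtain ⟨L, _, s, _, g, fac⟩ := right_fac_of_isStrictlyLE (f ≫ e.hom) n
  obtain ⟨A, i, p, hp, comm⟩ := exists_from_single_comp_eq_single_map_epi s
  have hig : i ≫ g = 0 := HomologicalComplex.from_single_hom_ext
    ((K.isZero_of_isStrictlyLE m n hmn).eq_of_tgt _ _)
  refine ⟨A, p, hp, (cancel_mono e.hom).1 ?_⟩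
  rw [Category.assoc, fac, ← comm, Q.map_comp, Category.assoc, IsIso.hom_inv_id_assoc,
    ← Q.map_comp, hig, Functor.map_zero, zero_comp]

lemma exists_factorization_through_single_shift_one {X : C} {W : DerivedCategory C} [W.IsLE (-1)]
    (f : (singleFunctor C 0).obj X ⟶ W) :
    ∃ (N : C) (a : (singleFunctor C 0).obj X ⟶ ((singleFunctor C 0).obj N)⟦(1 : ℤ)⟧)
      (b : ((singleFunctor C 0).obj N)⟦(1 : ℤ)⟧ ⟶ W), a ≫ b = f := by
  obtain ⟨A, p, _, hp⟩ := exists_epi_Q_map_single_map_comp_eq_zero (m := -1) (by lia) f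
  have hS : (ShortComplex.mk (kernel.ι p) p (kernel.condition p)).ShortExact :=
    { exact := ShortComplex.exact_kernel p }
  obtain ⟨b, hb⟩ := Triangle.yoneda_exact₃ _ hS.singleTriangle_distinguished f hp
  exact ⟨kernel p, _, b, hb.symm⟩

lemma exists_factorization_through_single_shift {X : C} {W : DerivedCategory C} (k : ℕ)
    (hW : W.IsLE (-k)) (f : (singleFunctor C 0).obj X ⟶ W) :
    ∃ (N : C) (a : (singleFunctor C 0).obj X ⟶ ((singleFunctor C 0).obj N)⟦(k : ℤ)⟧)
      (b : ((singleFunctor C 0).obj N)⟦(k : ℤ)⟧ ⟶ W), a ≫ b = f := by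
  induction k with
  | zero =>
    let e := (shiftFunctorZero (DerivedCategory C) ℤ).app ((singleFunctor C 0).obj X)
    exact ⟨X, e.inv, e.hom ≫ f, e.inv_hom_id_assoc f⟩
  | succ k ih =>
    have : TStructure.t.IsLE W (-(k + 1 : ℕ)) := hW
    have : W.IsLE (-k) := TStructure.t.isLE_of_le W (-(k + 1 : ℕ)) (-k)
    obtain ⟨N, a, b, rfl⟩ := ih this
    let ε := (shiftFunctorCompIsoId (DerivedCategory C) (-k : ℤ) k (by simp)).app W
    obtain ⟨β, hβ⟩ := (shiftFunctor (DerivedCategory C) (k : ℤ)).map_surjective (b ≫ ε.inv)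
    have : (W⟦-(k : ℤ)⟧).IsLE (-1) := TStructure.t.isLE_shift W (-(k + 1 : ℕ)) (-k) (-1)
    obtain ⟨N', a', b', rfl⟩ := exists_factorization_through_single_shift_one β
    let e := (shiftFunctorAdd' (DerivedCategory C) (1 : ℤ) k (k + 1 : ℕ) (by push_cast; ring)).app
      ((singleFunctor C 0).obj N')
    refine ⟨N', a ≫ a'⟦(k : ℤ)⟧' ≫ e.inv, e.hom ≫ b'⟦(k : ℤ)⟧' ≫ ε.hom, ?_⟩
    rw [Functor.map_comp, Iso.eq_comp_inv, Category.assoc] at hβ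
    rw [← hβ, Category.assoc, Category.assoc, e.inv_hom_id_assoc]

lemma hasProjectiveDimensionLT_of_forall_hom_shift_eq_zero (X : C) (d : ℕ)
    (h : ∀ i : ℕ, d ≤ i → ∀ (N : C) (f : (singleFunctor C 0).obj X ⟶
      ((singleFunctor C 0).obj N)⟦(i : ℤ)⟧), f = 0) : HasProjectiveDimensionLT X d :=
  have := hasExt_of_hasDerivedCategory C
  HasProjectiveDimensionLT.mk fun i hi N _ =>
    Abelian.Ext.homAddEquiv.injective ((h i hi N _).trans (map_zero _).symm)

lemma subsingleton_hom_of_isLE_of_hasProjectiveDimensionLT (X : C) (k : ℕ)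
    [HasProjectiveDimensionLT X k] (W : DerivedCategory C) [W.IsLE (-k)] :
    Subsingleton ((singleFunctor C 0).obj X ⟶ W) := by
  refine subsingleton_of_forall_eq 0 fun f => ?_
  obtain ⟨N, a, b, rfl⟩ := exists_factorization_through_single_shift k ‹_› f
  have := hasExt_of_hasDerivedCategory C
  have : Subsingleton (Abelian.Ext X N k) := HasProjectiveDimensionLT.subsingleton X k k le_rfl N
  have := (Abelian.Ext.homEquiv (X := X) (Y := N) (n := k)).symm.subsingleton
  rw [show a = 0 from this.elim _ _, zero_comp]

end

/-! ### Morphisms into coproducts of shifted stalk complexes -/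

section

variable {D : Type*} [Category* D]

lemma subsingleton_hom_sigma_of_forall_fiber [Preadditive D] {J γ : Type*} {Y : J → D}
    [HasCoproduct Y] (c : J → γ) (hc : (Set.range c).Finite)
    [∀ x, HasCoproduct fun j : {j // c j = x} => Y j] {A : D}
    (h : ∀ x, Subsingleton (A ⟶ ∐ fun j : {j // c j = x} => Y j)) :
    Subsingleton (A ⟶ ∐ Y) := by
  classical
  let π (x : γ) : ∐ Y ⟶ ∐ fun j : {j // c j = x} => Y j := Sigma.desc fun j =>
    if hj : c j = x then Sigma.ι (fun j : {j // c j = x} => Y j) ⟨j, hj⟩ else 0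
  let ι (x : γ) : (∐ fun j : {j // c j = x} => Y j) ⟶ ∐ Y := Sigma.desc fun j => Sigma.ι Y j
  have sum_π_comp_ι : ∑ x ∈ hc.toFinset, π x ≫ ι x = 𝟙 _ := by
    refine Sigma.hom_ext _ _ fun j => ?_
    rw [Preadditive.comp_sum, Finset.sum_eq_single (c j)]
    · simp [π, ι]
    · intro x _ hx
      simp [π, hx.symm]
    · simp
  refine subsingleton_of_forall_eq 0 fun f => ?_
  rw [← Category.comp_id f, ← sum_π_comp_ι, Preadditive.comp_sum]
  refine Finset.sum_eq_zero fun x _ => ?_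
  rw [← Category.assoc, (h x).elim (f ≫ π x) 0, zero_comp]

variable [HasShift D ℤ]

lemma subsingleton_shift_hom_iff (A B : D) (n : ℤ) :
    Subsingleton (A⟦n⟧ ⟶ B) ↔ Subsingleton (A ⟶ B⟦-n⟧) :=
  ((shiftEquiv D n).toAdjunction.homEquiv A B).subsingleton_congr

lemma subsingleton_shift_hom_shift_iff (A B : D) {a b c : ℤ} (h : a + c = b) :
    Subsingleton (A⟦a⟧ ⟶ B⟦b⟧) ↔ Subsingleton (A ⟶ B⟦c⟧) := by
  rw [subsingleton_shift_hom_iff]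
  exact (Iso.homCongr (Iso.refl A)
    ((shiftFunctorAdd' D b (-a) c (by lia)).app B).symm).subsingleton_congr

lemma subsingleton_shift_hom_shift_shift_iff (A B : D) {a b b' c : ℤ} (h : a + c = b + b') :
    Subsingleton (A⟦a⟧ ⟶ B⟦b⟧⟦b'⟧) ↔ Subsingleton (A ⟶ B⟦c⟧) := by
  rw [← subsingleton_shift_hom_shift_iff A B h]
  exact (Iso.homCongr (Iso.refl _) ((shiftFunctorAdd D b b').app B).symm).subsingleton_congr

end

section

variable {C : Type*} [Category* C] [Abelian C] [HasDerivedCategory C]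
open DerivedCategory

lemma subsingleton_shift_hom_sigma_of_forall_ge (X : C) (d : ℕ) [HasProjectiveDimensionLT X d]
    {m : ℤ} {J : Type*} (Y : J → C) (g : J → ℤ)
    [HasCoproduct fun j => ((singleFunctor C 0).obj (Y j))⟦g j⟧] (hg : ∀ j, m + d ≤ g j) :
    Subsingleton (((singleFunctor C 0).obj X)⟦m⟧ ⟶
      ∐ fun j => ((singleFunctor C 0).obj (Y j))⟦g j⟧) := by
  have (j : J) : TStructure.t.IsLE (((singleFunctor C 0).obj (Y j))⟦g j⟧) (-m - d) := by
    have := TStructure.t.isLE_shift ((singleFunctor C 0).obj (Y j)) 0 (g j) (-g j)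
    have := hg j
    exact TStructure.t.isLE_of_le _ (-g j) _
  have := isLE_sigma TStructure.t (fun j => ((singleFunctor C 0).obj (Y j))⟦g j⟧) (-m - d)
  have : ((∐ fun j => ((singleFunctor C 0).obj (Y j))⟦g j⟧)⟦-m⟧).IsLE (-d) :=
    TStructure.t.isLE_shift _ (-m - d) _ _
  rw [subsingleton_shift_hom_iff]
  exact subsingleton_hom_of_isLE_of_hasProjectiveDimensionLT X d _

variable {J : Type*} [HasCoproductsOfShape J C] [HasExactColimitsOfShape (Discrete J) C]

lemma subsingleton_shift_hom_sigma_of_forall_lt (X : C) {m : ℤ} (Y : J → C) (g : J → ℤ)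
    [HasCoproduct fun j => ((singleFunctor C 0).obj (Y j))⟦g j⟧] (hg : ∀ j, g j < m) :
    Subsingleton (((singleFunctor C 0).obj X)⟦m⟧ ⟶
      ∐ fun j => ((singleFunctor C 0).obj (Y j))⟦g j⟧) := by
  have := TStructure.t.isLE_shift ((singleFunctor C 0).obj X) 0 m (-m)
  have (j : J) : (((singleFunctor C 0).obj (Y j))⟦g j⟧).IsGE (-m + 1) := by
    have := TStructure.t.isGE_shift ((singleFunctor C 0).obj (Y j)) 0 (g j) (-g j)
    have := hg j
    exact TStructure.t.isGE_of_ge _ _ (-g j)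
  have := isGE_sigma (fun j => ((singleFunctor C 0).obj (Y j))⟦g j⟧) (-m + 1)
  exact subsingleton_of_forall_eq 0 fun f => TStructure.t.zero f (-m) (-m + 1)

lemma nonempty_sigma_shift_singleFunctor_iso (X : J → C) (p : ℤ)
    [h : HasCoproduct fun j => ((singleFunctor C 0).obj (X j))⟦p⟧] :
    Nonempty ((∐ fun j => ((singleFunctor C 0).obj (X j))⟦p⟧) ≅
      ((singleFunctor C 0).obj (∐ X))⟦p⟧) :=
  let F := singleFunctor C 0 ⋙ shiftFunctor (DerivedCategory C) p
  have : HasCoproduct fun j => F.obj (X j) := h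
  ⟨(PreservesCoproduct.iso F X).symm⟩

end

section

variable {C : Type u} [Category.{v} C] [Abelian C] [HasDerivedCategory.{w} C]
  [HasCoproducts.{v} C] [AB4 C] [HasCoproducts.{v} (DerivedCategory C)]
open DerivedCategory

lemma subsingleton_shift_hom_sigma (X : C) (d : ℕ) [HasProjectiveDimensionLT X d]
    {m : ℤ} (T : ℤ → C)
    (hT : ∀ (p : ℤ) (I : Type v), m ≤ p → Subsingleton ((singleFunctor C 0).obj X ⟶
      ((singleFunctor C 0).obj (∐ fun _ : I => T p))⟦p - m⟧)) {J : Type v} (g : J → ℤ) :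
    Subsingleton (((singleFunctor C 0).obj X)⟦m⟧ ⟶
      ∐ fun j => ((singleFunctor C 0).obj (T (g j)))⟦g j⟧) := by
  -- Clamping `g` leaves finitely many values; the two extreme fibers collect the summands that
  -- receive no morphism for degree reasons.
  let c (j : J) : ℤ := max (m - 1) (min (g j) (m + d))
  have hc : (Set.range c).Finite := (Set.finite_Icc (m - 1) (m + d)).subset (by
    rintro _ ⟨j, rfl⟩
    simp only [c, Set.mem_Icc]
    lia)
  refine subsingleton_hom_sigma_of_forall_fiber c hc fun p => ?_
  obtain hpm | hmp := lt_or_ge p m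
  · exact subsingleton_shift_hom_sigma_of_forall_lt X _ _ fun j => by have := j.2; lia
  obtain hmp' | hpm' := le_or_gt (m + d) p
  · exact subsingleton_shift_hom_sigma_of_forall_ge X d _ _ fun j => by have := j.2; lia
  have hg (j : {j // c j = p}) : g j = p := by have := j.2; lia
  obtain ⟨e⟩ := nonempty_sigma_shift_singleFunctor_iso (fun _ : {j // c j = p} => T p) p
  have e' : (∐ fun j : {j // c j = p} => ((singleFunctor C 0).obj (T (g j)))⟦g j⟧) ≅
      ∐ fun _ : {j // c j = p} => ((singleFunctor C 0).obj (T p))⟦p⟧ :=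
    Sigma.mapIso fun j => eqToIso (by rw [hg j])
  rw [(Iso.homCongr (Iso.refl _) (e' ≪≫ e)).subsingleton_congr,
    subsingleton_shift_hom_shift_iff _ _ (add_sub_cancel m p)]
  exact hT p _ hmp

end

theorem stmt18_general [AB4 G] [HasCoproducts.{v} (DerivedCategory G)]
    (hpd : ∀ n, ∃ d : ℕ, HasProjectiveDimensionLT (T n) d) :
    (∀ (p n : ℤ) (I : Type v) (k : ℕ), p - n < (k : ℤ) →
      ∀ f : (DerivedCategory.singleFunctor G 0).obj (T n) ⟶
        ((DerivedCategory.singleFunctor G 0).obj (∐ (fun _ : I => T p)))⟦(k : ℤ)⟧, f = 0) ↔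
    (∀ X Y : DerivedCategory G, X ∈ sumShiftSet T → Y ∈ sumShiftSet T →
      ∀ k : ℤ, 0 < k → ∀ f : X ⟶ Y⟦k⟧, f = 0) := by
  constructor
  · rintro hT X Y ⟨I, g, ⟨e⟩⟩ ⟨J, g', ⟨e'⟩⟩ k hk
    suffices Subsingleton ((∐ fun i => ((DerivedCategory.singleFunctor G 0).obj (T (g i)))⟦g i⟧) ⟶
        (∐ fun j => ((DerivedCategory.singleFunctor G 0).obj (T (g' j)))⟦g' j⟧)⟦k⟧) from
      fun f => (e.homCongr ((shiftFunctor _ k).mapIso e')).subsingleton.elim f 0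
    refine subsingleton_of_forall_eq 0 fun f => Sigma.hom_ext _ _ fun i => ?_
    refine Subsingleton.elim (h := ?_) _ _
    obtain ⟨d, _⟩ := hpd (g i)
    rw [subsingleton_shift_hom_shift_iff _ _ (add_sub_cancel (g i) k), ← neg_sub,
      ← subsingleton_shift_hom_iff]
    refine subsingleton_shift_hom_sigma _ d T (fun p I hp => ?_) g'
    obtain ⟨l, hl⟩ := Int.eq_ofNat_of_zero_le (sub_nonneg.2 hp)
    rw [hl]
    exact subsingleton_of_forall_eq 0 (hT p _ I l (by lia))
  · intro hT p n I k hk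
    obtain ⟨e⟩ := nonempty_sigma_shift_singleFunctor_iso (fun _ : I => T p) p
    let e₀ := coproductUniqueIso
      fun _ : PUnit.{v + 1} => ((DerivedCategory.singleFunctor G 0).obj (T n))⟦n⟧
    have := subsingleton_of_forall_eq 0 (hT _ _ ⟨PUnit, fun _ => n, ⟨e₀.symm⟩⟩
      ⟨I, fun _ => p, ⟨e.symm⟩⟩ (n + k - p) (by lia))
    rw [subsingleton_shift_hom_shift_shift_iff _ _ (add_sub_cancel p (n + k)).symm] at this
    exact fun f => this.elim f 0

/-- Let `G` be a Grothendieck category of global dimension `≤ d < ∞` and `(T_n)_{n∈ℤ}` a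
sequence of objects of `G`.  Then `(T_n)` is a superexceptional sequence, i.e.
`Ext^k_G(T_n, T_p^{(I)}) = 0` for all `p, n ∈ ℤ`, all sets `I` and all natural numbers
`k > p - n`, if and only if the set `𝒯 = {T_n[n] : n ∈ ℤ}` is strongly nonpositive in
`D(G)`, i.e. `Hom_{D(G)}(X, Y⟦k⟧) = 0` for all `k > 0` whenever `X, Y ∈ Sum(𝒯)`. -/
theorem stmt18 [AB5 G] (G₀ : G) (hsep : IsSeparator G₀)
    [HasCoproducts.{v} (DerivedCategory G)] (d : ℕ)
    (hgldim : ∀ (k : ℤ), (d : ℤ) < k → ∀ M N : G,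
      ∀ f : (DerivedCategory.singleFunctor G 0).obj M ⟶
        ((DerivedCategory.singleFunctor G 0).obj N)⟦k⟧, f = 0) :
    (∀ (p n : ℤ) (I : Type v) (k : ℕ), p - n < (k : ℤ) →
      ∀ f : (DerivedCategory.singleFunctor G 0).obj (T n) ⟶
        ((DerivedCategory.singleFunctor G 0).obj (∐ (fun _ : I => T p)))⟦(k : ℤ)⟧, f = 0) ↔
    (∀ X Y : DerivedCategory G, X ∈ sumShiftSet T → Y ∈ sumShiftSet T →
      ∀ k : ℤ, 0 < k → ∀ f : X ⟶ Y⟦k⟧, f = 0) := by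
  have := Abelian.hasFiniteBiproducts (C := G)
  have : AB4 G := AB4.of_AB5 G
  exact stmt18_general T fun n => ⟨d + 1, hasProjectiveDimensionLT_of_forall_hom_shift_eq_zero _ _
    fun i hi N => hgldim i (by lia) _ N⟩
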